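/- Let R = k[x1,...,xn] and let A = R/I be a graded artinian algebra with dim_k A_1 ≥ 2. Suppose that for some t, the degree-t graded piece I_t has a greatest common divisor D, a form of degree d > 0 (meaning every element of I_t is divisible by D). Set B = R/(I:D). Then for every i ≤ t, H_B(i − d) = H_A(i) − [C(i+n−1, n−1) − C(i−d+n−1, n−1)], where C(a,b) denotes the binomial coefficient and H denotes the Hilbert function. -/

import Mathlib

/-!
Since `dim A₁ ≥ 2`, there are at least two variables. If `f ∈ I` is a form of degree `i ≤ t`, then
`X a ^ (t - i) * f` lies in `I_t` for every variable `X a`, so it is divisible by `D`; as powers of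
two different variables have no common factor, `D` divides `f` itself (`dvd_of_mem_of_le`). Hence
`D` is a common divisor of `I_i` for every `i ≤ t`.

If `i < d`, this forces `I_i = 0`. If `i = d + e`, multiplication by `D` is injective and maps
`(I : D)_e` onto `I_i`, so these two spaces have the same dimension (`finrank_idealPiece_colon`).
Both cases then follow from `dim (R/J)_i + dim J_i = C(i + n - 1, n - 1)`
(`hilbertFn_add_finrank_idealPiece`), applied to `J = I` and `J = (I : D)`.
-/

open MvPolynomial

variable {k : Type*} [Field k] {n : ℕ}

/-- The degree-`i` graded piece of `R/I`, as a `k`-submodule of `R/I`. -/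
noncomputable def quotPiece (I : Ideal (MvPolynomial (Fin n) k)) (i : ℕ) :
    Submodule k (MvPolynomial (Fin n) k ⧸ I) :=
  (homogeneousSubmodule (Fin n) k i).map (Ideal.Quotient.mkₐ k I).toLinearMap

/-- The Hilbert function of `R/I`:  `H_{R/I}(i) = dim_k (R/I)_i`. -/
noncomputable def hilbertFn (I : Ideal (MvPolynomial (Fin n) k)) (i : ℕ) : ℕ :=
  Module.finrank k (quotPiece I i)

/-- The socle of `R/I`, i.e. the annihilator of the irrelevant maximal ideal of `R/I`. -/
noncomputable def socle (I : Ideal (MvPolynomial (Fin n) k)) :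
    Submodule k (MvPolynomial (Fin n) k ⧸ I) :=
  ⨅ j : Fin n, LinearMap.ker (LinearMap.mulLeft k (Ideal.Quotient.mk I (X j)))

/-- An ideal is homogeneous if it contains all homogeneous components of its elements. -/
def IsHomogeneousIdeal (I : Ideal (MvPolynomial (Fin n) k)) : Prop :=
  ∀ f ∈ I, ∀ i : ℕ, homogeneousComponent i f ∈ I

/-- A sequence is unimodal: it never strictly increases after it has strictly decreased,
i.e. it is non-decreasing up to some index `j` and non-increasing afterwards. -/
def UnimodalSeq (h : ℕ → ℕ) : Prop :=
  ∃ j : ℕ, (∀ i, i < j → h i ≤ h (i + 1)) ∧ (∀ i, j ≤ i → h (i + 1) ≤ h i)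

/-- The degree-`d` graded piece of an ideal, as a `k`-submodule of `R`. -/
noncomputable def idealPiece (I : Ideal (MvPolynomial (Fin n) k)) (d : ℕ) :
    Submodule k (MvPolynomial (Fin n) k) :=
  homogeneousSubmodule (Fin n) k d ⊓ I.restrictScalars k

/-- The number of minimal generators of `I` in degree `d`, i.e. `dim_k (I/mI)_d`,
where `m = (x_1, …, x_n)` is the irrelevant maximal ideal. -/
noncomputable def minGens (I : Ideal (MvPolynomial (Fin n) k)) (d : ℕ) : ℕ :=
  Module.finrank k ((idealPiece I d).map
    ((Ideal.span (Set.range (X : Fin n → MvPolynomial (Fin n) k)) * I).restrictScalars k).mkQ)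

/-- `H_{R/I}` extended to `ℤ` by the convention that it vanishes in negative degrees. -/
noncomputable def hilbZ (I : Ideal (MvPolynomial (Fin n) k)) (i : ℤ) : ℕ :=
  if 0 ≤ i then hilbertFn I i.toNat else 0

/-- The binomial coefficient `C(a, b)` for `a : ℤ`, with the (dimension-count) convention
that it vanishes when `a < 0`. -/
def chooseZ (a : ℤ) (b : ℕ) : ℕ := if 0 ≤ a then a.toNat.choose b else 0

/-- `dim R_i = C(i + n - 1, n - 1)`, by counting the monomials of degree `i`. The case `n = 0` is
excluded because `n - 1` is truncated there. -/
theorem finrank_homogeneousSubmodule_fin (hn : 1 ≤ n) (i : ℕ) :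
    Module.finrank k (homogeneousSubmodule (Fin n) k i) = (i + n - 1).choose (n - 1) := by
  have hspan : homogeneousSubmodule (Fin n) k i = Submodule.span k
      (Set.range fun s : Finset.univ.finsuppAntidiag i => basisMonomials (Fin n) k s.1) := by
    rw [homogeneousSubmodule_eq_finsupp_supported, AddMonoidAlgebra.supported_eq_span_single]
    congr 1
    ext p
    simp [Finsupp.degree_eq_sum, MvPolynomial.single_eq_monomial]
  have hli : LinearIndependent k
      fun s : Finset.univ.finsuppAntidiag i => basisMonomials (Fin n) k s.1 :=
    (basisMonomials (Fin n) k).linearIndependent.comp _ Subtype.val_injective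
  rw [hspan, finrank_span_eq_card hli, Fintype.card_coe, Finset.card_finsuppAntidiag_nat_eq_choose, Finset.card_univ,
    Fintype.card_fin, add_comm n i]
  refine Nat.choose_symm_of_eq_add ?_
  omega

/-- Rank-nullity for the projection `R_i → (R/I)_i`, whose kernel is `I_i`. -/
theorem hilbertFn_add_finrank_idealPiece (hn : 1 ≤ n) (I : Ideal (MvPolynomial (Fin n) k))
    (i : ℕ) :
    hilbertFn I i + Module.finrank k (idealPiece I i) = (i + n - 1).choose (n - 1) := by
  have hfin : FiniteDimensional k (homogeneousSubmodule (Fin n) k i) :=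
    Module.Finite.iff_fg.mpr (homogeneousSubmodule_fg (Fin n) k i)
  set π := (Ideal.Quotient.mkₐ k I).toLinearMap
  have h := (π.domRestrict (homogeneousSubmodule (Fin n) k i)).finrank_range_add_finrank_ker
  have hker : (LinearMap.ker (π.domRestrict (homogeneousSubmodule (Fin n) k i))).map
      (homogeneousSubmodule (Fin n) k i).subtype = idealPiece I i := by
    ext p
    simp [idealPiece, π, Ideal.Quotient.eq_zero_iff_mem, and_comm]
  rwa [← Submodule.finrank_map_subtype_eq, hker, LinearMap.range_domRestrict,
    finrank_homogeneousSubmodule_fin hn] at h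

/-- If `D` divides `X a ^ m * f` and `X b ^ m * f` with `a ≠ b`, then `D ∣ f`: comparing the two
quotients shows that `X a ^ m` divides the first one, since `X a` is prime and prime to `X b`. -/
theorem dvd_of_dvd_X_pow_mul {a b : Fin n} (hab : a ≠ b) (m : ℕ)
    {D f : MvPolynomial (Fin n) k} (hD0 : D ≠ 0)
    (ha : D ∣ X a ^ m * f) (hb : D ∣ X b ^ m * f) : D ∣ f := by
  obtain ⟨g, hg⟩ := ha
  obtain ⟨h, hh⟩ := hb
  have hcross : X b ^ m * g = X a ^ m * h := by
    apply mul_left_cancel₀ hD0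
    linear_combination X a ^ m * hh - X b ^ m * hg
  have hprime : Prime (X a : MvPolynomial (Fin n) k) := X_prime
  have hnd : ¬ (X a : MvPolynomial (Fin n) k) ∣ X b ^ m := fun hdvd =>
    hab (X_dvd_X.mp (hprime.dvd_of_dvd_pow hdvd))
  obtain ⟨g', rfl⟩ := hprime.pow_dvd_of_dvd_mul_left m hnd ⟨h, hcross⟩
  refine ⟨g', mul_left_cancel₀ (pow_ne_zero m hprime.ne_zero) ?_⟩
  rw [hg]; ring

/-- A common divisor of `I_t` also divides all elements of `I_i` for `i ≤ t`, provided that there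
are at least two variables. -/
theorem dvd_of_mem_of_le (hn : 2 ≤ n) {I : Ideal (MvPolynomial (Fin n) k)} {t : ℕ}
    {D : MvPolynomial (Fin n) k} (hD0 : D ≠ 0)
    (hgcd : ∀ f ∈ I, f.IsHomogeneous t → D ∣ f) {i : ℕ} (hi : i ≤ t)
    {f : MvPolynomial (Fin n) k} (hf : f ∈ I) (hfi : f.IsHomogeneous i) : D ∣ f := by
  have key : ∀ a : Fin n, D ∣ X a ^ (t - i) * f := fun a => by
    refine hgcd _ (I.mul_mem_left _ hf) ?_
    have := (isHomogeneous_X_pow (R := k) a (t - i)).mul hfi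
    rwa [Nat.sub_add_cancel hi] at this
  exact dvd_of_dvd_X_pow_mul (a := ⟨0, by omega⟩) (b := ⟨1, by omega⟩) (by simp) (t - i) hD0
    (key _) (key _)

/-- A form divisible by a form has a homogeneous quotient, namely the degree-`e` component of any
quotient; this also covers `D = 0`, where the quotient is not unique. -/
theorem exists_homogeneous_quotient {D f : MvPolynomial (Fin n) k} {d e : ℕ}
    (hD : D.IsHomogeneous d) (hf : f.IsHomogeneous (d + e)) (hdvd : D ∣ f) :
    ∃ g : MvPolynomial (Fin n) k, g.IsHomogeneous e ∧ f = D * g := by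
  let _ : GradedAlgebra (homogeneousSubmodule (Fin n) k) := MvPolynomial.gradedAlgebra
  obtain ⟨g, rfl⟩ := hdvd
  refine ⟨DirectSum.decompose (homogeneousSubmodule (Fin n) k) g e, (DirectSum.decompose (homogeneousSubmodule (Fin n) k) g e).2, ?_⟩
  rw [← DirectSum.coe_decompose_mul_add_of_left_mem (homogeneousSubmodule (Fin n) k) hD,
    DirectSum.decompose_of_mem_same _ hf]

theorem idealPiece_eq_bot_of_lt {I : Ideal (MvPolynomial (Fin n) k)}
    {D : MvPolynomial (Fin n) k} {d i : ℕ} (hD : D.IsHomogeneous d) (hD0 : D ≠ 0) (hid : i < d)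
    (hdvd : ∀ f ∈ I, f.IsHomogeneous i → D ∣ f) : idealPiece I i = ⊥ := by
  rw [Submodule.eq_bot_iff]
  rintro f ⟨hfi, hf⟩
  by_contra hf0
  have hle := MvPolynomial.totalDegree_le_of_dvd_of_isDomain (hdvd f hf hfi) hf0
  rw [hD.totalDegree hD0, IsHomogeneous.totalDegree hfi hf0] at hle
  omega

/-- If `D` divides every element of `I_{d+e}`, multiplication by `D` is an isomorphism
`(I : D)_e ≃ I_{d+e}`. -/
theorem finrank_idealPiece_colon {I : Ideal (MvPolynomial (Fin n) k)}
    {D : MvPolynomial (Fin n) k} {d e : ℕ} (hD : D.IsHomogeneous d) (hD0 : D ≠ 0)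
    (hdvd : ∀ f ∈ I, f.IsHomogeneous (d + e) → D ∣ f) :
    Module.finrank k (idealPiece (I.colon (Ideal.span {D})) e) =
      Module.finrank k (idealPiece I (d + e)) := by
  have hmap : (idealPiece (I.colon (Ideal.span {D})) e).map (LinearMap.mulLeft k D) =
      idealPiece I (d + e) := by
    ext f
    constructor
    · rintro ⟨g, ⟨hge, hg⟩, rfl⟩
      refine ⟨hD.mul hge, ?_⟩
      have := Ideal.mem_colon_span_singleton.mp hg
      simpa [mul_comm] using this
    · rintro ⟨hfi, hf⟩
      obtain ⟨g, hge, rfl⟩ := exists_homogeneous_quotient hD hfi (hdvd f hf hfi)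
      refine ⟨g, ⟨hge, ?_⟩, rfl⟩
      refine Ideal.mem_colon_span_singleton.mpr ?_
      simpa [mul_comm] using hf
  rw [← hmap]
  exact LinearEquiv.finrank_eq (Submodule.equivMapOfInjective (LinearMap.mulLeft k D)
    (mul_right_injective₀ hD0) _)

/-- `A₁` is a quotient of `R₁`, which has dimension `n`. -/
theorem two_le_of_two_le_hilbertFn_one {I : Ideal (MvPolynomial (Fin n) k)}
    (h1 : 2 ≤ hilbertFn I 1) : 2 ≤ n := by
  rcases Nat.eq_zero_or_pos n with rfl | hn
  · have hbot : quotPiece I 1 = ⊥ := by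
      rw [quotPiece, homogeneousSubmodule_one_eq_span_X]
      simp
    rw [hilbertFn, hbot, finrank_bot] at h1
    omega
  · have h := hilbertFn_add_finrank_idealPiece hn I 1
    have hc : (1 + n - 1).choose (n - 1) = n := by
      obtain ⟨m, rfl⟩ := Nat.exists_eq_add_of_le' hn
      simp [Nat.choose_succ_self_right]
    omega

/-- **Lemma 2.3 (first part).**  Let `A = R/I` be a graded artinian algebra with
`dim_k A₁ ≥ 2`.  Assume the degree-`t` graded piece `I_t` has a GCD `D` of degree `d > 0`
(every element of `I_t` is divisible by `D`) and set `B = R/(I:D)`.  Then for all `i ≤ t`,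
`H_B(i-d) = H_A(i) - [C(i+n-1, n-1) - C(i-d+n-1, n-1)]`. -/
theorem hilbert_of_colon_by_gcd {k : Type*} [Field k] {n : ℕ}
    (I : Ideal (MvPolynomial (Fin n) k))
    (hhom : IsHomogeneousIdeal I)
    (hart : IsArtinianRing (MvPolynomial (Fin n) k ⧸ I))
    (h1 : 2 ≤ hilbertFn I 1)
    (t : ℕ) (D : MvPolynomial (Fin n) k) (d : ℕ) (hd : 0 < d)
    (hD : D.IsHomogeneous d) (hD0 : D ≠ 0)
    (hgcd : ∀ f ∈ I, f.IsHomogeneous t → D ∣ f) :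
    ∀ i : ℕ, i ≤ t →
      (hilbZ (I.colon (Ideal.span {D})) ((i : ℤ) - (d : ℤ)) : ℤ) =
        (hilbertFn I i : ℤ) -
          ((chooseZ ((i : ℤ) + (n : ℤ) - 1) (n - 1) : ℤ) -
            (chooseZ ((i : ℤ) - (d : ℤ) + (n : ℤ) - 1) (n - 1) : ℤ)) := by
  intro i hi
  have hn := two_le_of_two_le_hilbertFn_one h1
  have hdvd : ∀ f ∈ I, f.IsHomogeneous i → D ∣ f := fun f hf hfi =>
    dvd_of_mem_of_le hn hD0 hgcd hi hf hfi
  have hA := hilbertFn_add_finrank_idealPiece (by omega : 1 ≤ n) I i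
  have hci : chooseZ ((i : ℤ) + n - 1) (n - 1) = (i + n - 1).choose (n - 1) := by
    rw [chooseZ, if_pos (by omega)]
    congr 1
    omega
  rcases lt_or_ge i d with hid | hid
  · rw [idealPiece_eq_bot_of_lt hD hD0 hid hdvd, finrank_bot, add_zero] at hA
    have hB : hilbZ (I.colon (Ideal.span {D})) ((i : ℤ) - d) = 0 := if_neg (by omega)
    have hc : chooseZ ((i : ℤ) - d + n - 1) (n - 1) = 0 := by
      unfold chooseZ
      split_ifs
      -- the top entry `i - d + n - 1` is less than `n - 1`, as `i < d`
      · exact Nat.choose_eq_zero_of_lt (by omega)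
      · rfl
    rw [hB, hc, hci, hA]
    simp
  · obtain ⟨e, rfl⟩ := Nat.exists_eq_add_of_le hid
    have he : ((d + e : ℕ) : ℤ) - d = e := by push_cast; ring
    have hB := hilbertFn_add_finrank_idealPiece (by omega : 1 ≤ n)
      (I.colon (Ideal.span {D})) e
    rw [finrank_idealPiece_colon hD hD0 hdvd] at hB
    have hBZ : hilbZ (I.colon (Ideal.span {D})) (e : ℤ) =
        hilbertFn (I.colon (Ideal.span {D})) e := by
      simp [hilbZ]
    have hce : chooseZ ((e : ℤ) + n - 1) (n - 1) = (e + n - 1).choose (n - 1) := by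
      rw [chooseZ, if_pos (by omega)]
      congr 1
      omega
    rw [he, hBZ, hci, hce]
    omega
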